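/- There exist a constant c > 0 and n₀ such that for all n ≥ n₀, the number of sumsets in F₂ⁿ that do not contain any linear subspace of co-dimension 1 satisfies |𝒮ₙ \ ℋₙ| ≤ 2^(2^(n−1) − 2^(n/2 − c·√n)). In particular, |𝒮ₙ \ ℋₙ| = o(|𝒮ₙ|). -/

import Mathlib

open Pointwise

/-- `V n` is the vector space `F₂ⁿ`. -/
abbrev V (n : ℕ) : Type := Fin n → ZMod 2

/-- `𝒮ₙ`: the family of sumsets `A + A` for `A ⊆ F₂ⁿ`. -/
def sumsets (n : ℕ) : Finset (Finset (V n)) :=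
  Finset.image (fun A : Finset (V n) => A + A) Finset.univ

/-- `v^⊥ = {x : ⟨x, v⟩ = 0}`. -/
def perp {n : ℕ} (v : V n) : Finset (V n) :=
  Finset.univ.filter (fun x => ∑ i, x i * v i = 0)

/-- `ℋₙ`: subsets of `F₂ⁿ` containing a complete linear subspace of co-dimension 1. -/
def Hfam (n : ℕ) : Finset (Finset (V n)) :=
  Finset.univ.filter (fun S => ∃ v : V n, v ≠ 0 ∧ perp v ⊆ S)

def dot {n : ℕ} (x r : V n) : ZMod 2 := ∑ i, x i * r i

noncomputable def chi {n : ℕ} (r x : V n) : ℝ := if dot x r = 0 then 1 else -1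

theorem vadd_self {n : ℕ} (x : V n) : x + x = 0 := by
  ext i; exact CharTwo.add_self_eq_zero _

theorem vadd_cancel {n : ℕ} (x y : V n) : x + (x + y) = y := by
  rw [← add_assoc, vadd_self, zero_add]

theorem vadd_eq_zero {n : ℕ} {x y : V n} (h : x + y = 0) : y = x := by
  have := vadd_cancel x y
  rw [h, add_zero] at this; exact this.symm

theorem dot_add {n : ℕ} (x y r : V n) : dot (x + y) r = dot x r + dot y r := by
  simp [dot, add_mul, Finset.sum_add_distrib]

theorem dot_comm {n : ℕ} (x r : V n) : dot x r = dot r x := by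
  simp [dot, mul_comm]

theorem dot_zero {n : ℕ} (r : V n) : dot 0 r = 0 := by simp [dot]

theorem zmod2_cases (a : ZMod 2) : a = 0 ∨ a = 1 := by
  revert a; decide

theorem chi_comm {n : ℕ} (x r : V n) : chi r x = chi x r := by
  simp [chi, dot_comm]

theorem chi_add {n : ℕ} (r x y : V n) : chi r (x + y) = chi r x * chi r y := by
  unfold chi
  rw [dot_add]
  rcases zmod2_cases (dot x r) with h | h <;> rcases zmod2_cases (dot y r) with h' | h' <;>
    rw [h, h'] <;> simp
  intro h; exact absurd h (by decide)

theorem chi_zero {n : ℕ} (r : V n) : chi r 0 = 1 := by simp [chi, dot_zero]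

theorem chi_abs {n : ℕ} (r x : V n) : |chi r x| = 1 := by
  unfold chi; split_ifs <;> simp

theorem exists_dot_one {n : ℕ} {r : V n} (h : r ≠ 0) : ∃ e : V n, dot e r = 1 := by
  obtain ⟨i, hi⟩ := Function.ne_iff.1 h
  refine ⟨Pi.single i 1, ?_⟩
  have : r i = 1 := (zmod2_cases (r i)).resolve_left hi
  simp [dot, Pi.single_apply, this]

theorem sum_shift {n : ℕ} (g : V n → ℝ) (a : V n) : ∑ x, g (a + x) = ∑ x, g x :=
  Fintype.sum_equiv (Equiv.addLeft a) _ _ (fun _ => rfl)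

theorem cardV (n : ℕ) : Fintype.card (V n) = 2 ^ n := by simp [V]

theorem sum_chi {n : ℕ} (x : V n) : ∑ r, chi r x = if x = 0 then (2 : ℝ) ^ n else 0 := by
  split_ifs with h
  · subst h; simp [chi_zero]
  · obtain ⟨e, he⟩ := exists_dot_one h
    have h1 := sum_shift (fun r => chi x r) e
    simp only [chi_add, ← Finset.mul_sum] at h1
    have h2 : chi x e = -1 := by simp [chi, he]
    rw [h2] at h1
    simp only [fun r => chi_comm x r]
    linarith

noncomputable def ft {n : ℕ} (g : V n → ℝ) (r : V n) : ℝ := ∑ x, g x * chi r x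

noncomputable def conv {n : ℕ} (g h : V n → ℝ) (x : V n) : ℝ := ∑ y, g y * h (x + y)

theorem parseval {n : ℕ} (g : V n → ℝ) : ∑ r, ft g r ^ 2 = 2 ^ n * ∑ x, g x ^ 2 := by
  have h1 : ∀ r, ft g r ^ 2 = ∑ x, ∑ y, g x * g y * chi r (x + y) := by
    intro r
    rw [pow_two, ft, Finset.sum_mul_sum]
    refine Finset.sum_congr rfl fun x _ => Finset.sum_congr rfl fun y _ => ?_
    rw [chi_add]; ring
  simp only [h1]
  rw [Finset.sum_comm, Finset.mul_sum]
  refine Finset.sum_congr rfl fun x _ => ?_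
  rw [Finset.sum_comm]
  simp only [← Finset.mul_sum, sum_chi]
  rw [Finset.sum_eq_single x]
  · simp [vadd_self]; ring
  · intro y _ hy
    rw [if_neg]; simp
    intro h; exact hy (vadd_eq_zero h)
  · simp

theorem ft_conv {n : ℕ} (g h : V n → ℝ) (r : V n) : ft (conv g h) r = ft g r * ft h r := by
  unfold ft conv
  rw [Finset.sum_mul_sum]
  simp only [Finset.sum_mul]
  rw [Finset.sum_comm]
  refine Finset.sum_congr rfl fun y _ => ?_
  rw [← sum_shift _ y]
  refine Finset.sum_congr rfl fun x _ => ?_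
  rw [add_comm (y + x) y, vadd_cancel, chi_add]; ring

theorem ft_sub {n : ℕ} (g h : V n → ℝ) (r : V n) :
    ft (fun x => g x - h x) r = ft g r - ft h r := by
  simp [ft, sub_mul]

open Classical in
noncomputable def ind {n : ℕ} (A : Finset (V n)) (x : V n) : ℝ := if x ∈ A then 1 else 0

theorem ind_nonneg {n : ℕ} (A : Finset (V n)) (x : V n) : 0 ≤ ind A x := by
  unfold ind; split_ifs <;> norm_num

theorem ind_sq {n : ℕ} (A : Finset (V n)) (x : V n) : ind A x ^ 2 = ind A x := by
  unfold ind; split_ifs <;> norm_num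

theorem sum_ind {n : ℕ} (A : Finset (V n)) : ∑ x, ind A x = A.card := by
  simp [ind]

theorem card_le {n : ℕ} (A : Finset (V n)) : (A.card : ℝ) ≤ 2 ^ n := by
  have := Finset.card_le_univ A
  rw [cardV] at this; exact_mod_cast this

theorem parseval_ind {n : ℕ} (A : Finset (V n)) :
    ∑ r, ft (ind A) r ^ 2 = 2 ^ n * A.card := by
  rw [parseval]; simp only [ind_sq, sum_ind]
/-- popular sums -/
noncomputable def pop {n : ℕ} (e : ℝ) (F : Finset (V n)) : Finset (V n) := by
  classical
  exact Finset.univ.filter (fun x => e * 2 ^ n ≤ conv (ind F) (ind F) x)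

noncomputable def fam (n K : ℕ) : Finset (Finset (V n)) := by
  classical
  exact Finset.univ.image (fun p : (Fin K → V n) × Finset (Fin K → ZMod 2) =>
    Finset.univ.filter (fun x => (fun i => dot x (p.1 i)) ∈ p.2))

theorem card_fam (n K : ℕ) : (fam n K).card ≤ 2 ^ (n * K + 2 ^ K) := by
  classical
  unfold fam
  refine Finset.card_image_le.trans ?_
  simp [pow_add, pow_mul]

theorem container {e : ℝ} (he : 0 < e) (he1 : e < 1) (K : ℕ) (hK : 1 ≤ K * e ^ 7) (n : ℕ)
    (A : Finset (V n)) : ∃ F ∈ fam n K, ((A \ F).card : ℝ) ≤ e * 2 ^ n ∧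
      ((pop e F \ (A + A)).card : ℝ) ≤ e * 2 ^ n := by
  classical
  have hN : (0 : ℝ) < 2 ^ n := by positivity
  set L : Finset (V n) := Finset.univ.filter (fun r => e ^ 7 * (2 ^ n) ^ 2 ≤ ft (ind A) r ^ 2)
    with hL
  have hLc : L.card ≤ K := by
    have h1 : (L.card : ℝ) * (e ^ 7 * (2 ^ n) ^ 2) ≤ ∑ r ∈ L, ft (ind A) r ^ 2 := by
      rw [← nsmul_eq_mul]
      apply Finset.card_nsmul_le_sum
      intro r hr; simpa [hL] using hr
    have h2 : ∑ r ∈ L, ft (ind A) r ^ 2 ≤ 2 ^ n * A.card := by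
      rw [← parseval_ind]
      exact Finset.sum_le_univ_sum_of_nonneg (fun r => sq_nonneg _)
    have h3 := card_le A
    have h4 : (L.card : ℝ) * e ^ 7 ≤ 1 := by
      have : (L.card : ℝ) * e ^ 7 * (2 ^ n) ^ 2 ≤ 1 * (2 ^ n) ^ 2 := by nlinarith
      exact le_of_mul_le_mul_right this (by positivity)
    have h5 : (L.card : ℝ) * e ^ 7 ≤ K * e ^ 7 := h4.trans hK
    exact_mod_cast le_of_mul_le_mul_right h5 (by positivity)
  obtain ⟨R, hR⟩ : ∃ R : Fin K → V n, ∀ r ∈ L, ∃ i, R i = r := by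
    refine ⟨fun i => if h : (i : ℕ) < L.card then (L.equivFin.symm ⟨i, h⟩ : V n) else 0, ?_⟩
    intro r hr
    refine ⟨⟨L.equivFin ⟨r, hr⟩, lt_of_lt_of_le (Fin.is_lt _) hLc⟩, ?_⟩
    simp
  set W : Finset (V n) := Finset.univ.filter (fun w => ∀ i, dot w (R i) = 0) with hW
  have hW0 : (0 : V n) ∈ W := by simp [hW, dot_zero]
  have hWc : (0 : ℝ) < W.card := by exact_mod_cast Finset.card_pos.2 ⟨0, hW0⟩
  have hWadd : ∀ w ∈ W, ∀ w' ∈ W, w + w' ∈ W := by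
    intro w hw w' hw'
    simp only [hW, Finset.mem_filter, Finset.mem_univ, true_and] at *
    intro i; rw [dot_add, hw, hw', add_zero]
  set f : V n → ℝ := fun x => (∑ w ∈ W, ind A (w + x)) / W.card with hf
  have hf0 : ∀ x, 0 ≤ f x := fun x =>
    div_nonneg (Finset.sum_nonneg fun w _ => ind_nonneg _ _) hWc.le
  have hfinv : ∀ w ∈ W, ∀ x, f (w + x) = f x := by
    intro w hw x
    simp only [hf]
    congr 1
    refine Finset.sum_bij' (fun v _ => v + w) (fun v _ => v + w) ?_ ?_ ?_ ?_ ?_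
    · intro v hv; exact hWadd v hv w hw
    · intro v hv; exact hWadd v hv w hw
    · intro v hv; rw [add_assoc, vadd_self, add_zero]
    · intro v hv; rw [add_assoc, vadd_self, add_zero]
    · intro v hv; rw [add_assoc]
  set F : Finset (V n) := Finset.univ.filter (fun x => e ≤ f x) with hF
  have hFm : ∀ x, x ∈ F ↔ e ≤ f x := by simp [hF]
  have hFf : F ∈ fam n K := by
    unfold fam
    refine Finset.mem_image.2 ⟨(R, F.image (fun x i => dot x (R i))), Finset.mem_univ _, ?_⟩
    ext x
    simp only [Finset.mem_filter, Finset.mem_univ, true_and, Finset.mem_image]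
    constructor
    · rintro ⟨y, hy, hxy⟩
      have hw : x + y ∈ W := by
        simp only [hW, Finset.mem_filter, Finset.mem_univ, true_and]
        intro i
        have := congrFun hxy i
        rw [dot_add, this]; exact CharTwo.add_self_eq_zero _
      have := hfinv _ hw y
      rw [add_assoc, vadd_self, add_zero] at this
      rw [hFm, this, ← hFm]; exact hy
    · intro hx; exact ⟨x, hx, rfl⟩
  refine ⟨F, hFf, ?_, ?_⟩
  · -- A \ F
    have hFinv : ∀ w ∈ W, ∀ x, ind Fᶜ (w + x) = ind Fᶜ x := by
      intro w hw x
      simp only [ind, Finset.mem_compl, hFm, hfinv w hw x]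
    have h1 : ∑ x, ind Fᶜ x * f x = (A \ F).card := by
      simp only [hf, mul_div_assoc']
      rw [← Finset.sum_div]
      simp only [Finset.mul_sum]
      rw [Finset.sum_comm]
      have : ∀ w ∈ W, ∑ x, ind Fᶜ x * ind A (w + x) = (A \ F).card := by
        intro w hw
        have := sum_shift (fun x => ind Fᶜ x * ind A x) w
        simp only [hFinv w hw] at this
        rw [this, ← sum_ind]
        refine Finset.sum_congr rfl fun x _ => ?_
        simp only [ind, Finset.mem_compl, Finset.mem_sdiff]
        by_cases h : x ∈ F <;> by_cases h' : x ∈ A <;> simp [h, h']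
      rw [Finset.sum_congr rfl this, Finset.sum_const, nsmul_eq_mul]
      field_simp
    rw [← h1]
    calc ∑ x, ind Fᶜ x * f x ≤ ∑ x : V n, e := by
          refine Finset.sum_le_sum fun x _ => ?_
          simp only [ind, Finset.mem_compl, hFm]
          split_ifs with h
          · linarith
          · linarith
      _ = e * 2 ^ n := by
          rw [Finset.sum_const, Finset.card_univ, cardV, nsmul_eq_mul]; push_cast; ring
  · -- popular sums
    set m : V n → ℝ := fun r => (∑ w ∈ W, chi r w) / W.card with hm
    have hm1 : ∀ r, |m r| ≤ 1 := by
      intro r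
      simp only [hm]
      rw [abs_div, abs_of_pos hWc, div_le_one hWc]
      refine (Finset.abs_sum_le_sum_abs _ _).trans ?_
      simp [chi_abs]
    have hmL : ∀ r ∈ L, m r = 1 := by
      intro r hr
      obtain ⟨i, hi⟩ := hR r hr
      simp only [hm]
      rw [div_eq_one_iff_eq hWc.ne']
      rw [Finset.sum_congr rfl (g := fun _ => (1 : ℝ))]
      · simp
      · intro w hw
        simp only [hW, Finset.mem_filter, Finset.mem_univ, true_and] at hw
        have := hw i
        rw [hi] at this
        simp [chi, this]
    have hft : ∀ r, ft f r = ft (ind A) r * m r := by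
      intro r
      have key : ∀ w, ∑ x, ind A (w + x) * chi r x = ft (ind A) r * chi r w := by
        intro w
        rw [ft, ← sum_shift (fun x => ind A x * chi r x) w, Finset.sum_mul]
        refine Finset.sum_congr rfl fun x _ => ?_
        have h1 : chi r x = chi r (w + x) * chi r w := by
          rw [mul_comm, ← chi_add, vadd_cancel]
        have h2 : chi r w * chi r w = 1 := by rw [← chi_add, vadd_self, chi_zero]
        rw [h1]; ring
      simp only [hf, hm, mul_div_assoc', Finset.mul_sum, ← key]
      rw [Finset.sum_comm, Finset.sum_div]
      simp only [ft, div_mul_eq_mul_div, Finset.sum_mul]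
    set d : V n → ℝ := fun x => conv (ind A) (ind A) x - conv f f x with hd
    have hdft : ∀ r, ft d r = ft (ind A) r ^ 2 * (1 - m r ^ 2) := by
      intro r
      rw [hd, ft_sub, ft_conv, ft_conv, hft]; ring
    have hdb : ∀ r, ft d r ^ 2 ≤ e ^ 7 * (2 ^ n) ^ 2 * ft (ind A) r ^ 2 := by
      intro r
      rw [hdft]
      by_cases hr : r ∈ L
      · rw [hmL r hr]; simp; positivity
      · have h1 : ft (ind A) r ^ 2 < e ^ 7 * (2 ^ n) ^ 2 := by simpa [hL] using hr
        have h2 : m r ^ 2 ≤ 1 := (sq_le_one_iff_abs_le_one _).2 (hm1 r)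
        have h3 : (1 - m r ^ 2) ^ 2 ≤ 1 := by nlinarith [sq_nonneg (m r)]
        have h4 := sq_nonneg (ft (ind A) r)
        calc (ft (ind A) r ^ 2 * (1 - m r ^ 2)) ^ 2
            = (ft (ind A) r ^ 2 * ft (ind A) r ^ 2) * (1 - m r ^ 2) ^ 2 := by ring
          _ ≤ (ft (ind A) r ^ 2 * ft (ind A) r ^ 2) * 1 := by gcongr
          _ ≤ _ := by rw [mul_one]; gcongr
    have hsum : ∑ x, d x ^ 2 ≤ e ^ 7 * (2 ^ n) ^ 3 := by
      have h1 := parseval d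
      have h2 : ∑ r, ft d r ^ 2 ≤ e ^ 7 * (2 ^ n) ^ 2 * (2 ^ n * A.card) := by
        rw [← parseval_ind, Finset.mul_sum]
        exact Finset.sum_le_sum fun r _ => hdb r
      have h3 := card_le A
      have h4 : (2 : ℝ) ^ n * ∑ x, d x ^ 2 ≤ 2 ^ n * (e ^ 7 * (2 ^ n) ^ 3) := by
        rw [← h1]
        refine h2.trans ?_
        calc e ^ 7 * (2 ^ n) ^ 2 * (2 ^ n * (A.card : ℝ))
            ≤ e ^ 7 * (2 ^ n) ^ 2 * (2 ^ n * 2 ^ n) := by gcongr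
          _ = _ := by ring
      exact le_of_mul_le_mul_left h4 hN
    have hbad : ∀ x ∈ pop e F \ (A + A), e ^ 6 * (2 ^ n) ^ 2 ≤ d x ^ 2 := by
      intro x hx
      rw [Finset.mem_sdiff] at hx
      have hp : e * 2 ^ n ≤ conv (ind F) (ind F) x := by simpa [pop] using hx.1
      have h0 : conv (ind A) (ind A) x = 0 := by
        unfold conv
        refine Finset.sum_eq_zero fun y _ => ?_
        by_contra hne
        apply hx.2
        have hy : y ∈ A := by
          by_contra h; apply hne; simp [ind, h]
        have hy' : x + y ∈ A := by
          by_contra h; apply hne; simp [ind, h]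
        rw [Finset.mem_add]
        exact ⟨x + y, hy', y, hy, by rw [add_assoc, vadd_self, add_zero]⟩
      have hfi : ∀ y, e * ind F y ≤ f y := by
        intro y
        simp only [ind, hFm]
        split_ifs with h
        · linarith
        · simpa using hf0 y
      have h1 : e ^ 2 * conv (ind F) (ind F) x ≤ conv f f x := by
        unfold conv
        rw [Finset.mul_sum]
        refine Finset.sum_le_sum fun y _ => ?_
        have := mul_le_mul (hfi y) (hfi (x + y))
          (mul_nonneg he.le (ind_nonneg _ _)) (hf0 y)
        calc _ = e * ind F y * (e * ind F (x + y)) := by ring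
          _ ≤ _ := this
      have h2 : e ^ 3 * 2 ^ n ≤ conv f f x := by
        calc e ^ 3 * 2 ^ n = e ^ 2 * (e * 2 ^ n) := by ring
          _ ≤ e ^ 2 * conv (ind F) (ind F) x := by gcongr
          _ ≤ _ := h1
      have h3 : (e ^ 3 * 2 ^ n) ^ 2 ≤ conv f f x ^ 2 := by gcongr
      simp only [hd, h0]
      calc _ = (e ^ 3 * 2 ^ n) ^ 2 := by ring
        _ ≤ _ := h3
        _ = _ := by ring
    have h1 : ((pop e F \ (A + A)).card : ℝ) * (e ^ 6 * (2 ^ n) ^ 2) ≤ e ^ 7 * (2 ^ n) ^ 3 := by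
      rw [← nsmul_eq_mul]
      refine (Finset.card_nsmul_le_sum _ _ _ hbad).trans (le_trans ?_ hsum)
      exact Finset.sum_le_univ_sum_of_nonneg (fun r => sq_nonneg _)
    have h2 : ((pop e F \ (A + A)).card : ℝ) * (e ^ 6 * (2 ^ n) ^ 2) ≤
        (e * 2 ^ n) * (e ^ 6 * (2 ^ n) ^ 2) := by
      refine h1.trans (le_of_eq ?_); ring
    exact le_of_mul_le_mul_right h2 (by positivity)
def hyp {n : ℕ} (r : V n) (s : ZMod 2) : Finset (V n) :=
  Finset.univ.filter (fun x => dot x r = s)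

theorem ft_ind {n : ℕ} (F : Finset (V n)) (r : V n) :
    ft (ind F) r = ((F \ hyp r 1).card : ℝ) - (F \ hyp r 0).card := by
  rw [← sum_ind, ← sum_ind, ← Finset.sum_sub_distrib]
  refine Finset.sum_congr rfl fun x _ => ?_
  simp only [ind, chi, Finset.mem_sdiff, hyp, Finset.mem_filter, Finset.mem_univ, true_and]
  by_cases h : x ∈ F <;> rcases zmod2_cases (dot x r) with h' | h' <;> simp [h, h']

theorem card_hyp {n : ℕ} {r : V n} (hr : r ≠ 0) (s : ZMod 2) :
    ((hyp r s).card : ℝ) = 2 ^ n / 2 := by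
  have h1 := sum_chi r
  rw [if_neg hr] at h1
  have h0 : ∀ x, chi x r = ind (hyp r 0) x - ind (hyp r 1) x := by
    intro x
    simp only [ind, chi, hyp, Finset.mem_filter, Finset.mem_univ, true_and, dot_comm r x]
    rcases zmod2_cases (dot x r) with h' | h' <;> simp [h']
  have h2 : ∑ x : V n, (ind (hyp r 0) x + ind (hyp r 1) x) = 2 ^ n := by
    have : ∀ x, ind (hyp r 0) x + ind (hyp r 1) x = 1 := by
      intro x
      simp only [ind, hyp, Finset.mem_filter, Finset.mem_univ, true_and]
      rcases zmod2_cases (dot x r) with h' | h' <;> simp [h']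
    simp [this]
  simp only [h0, Finset.sum_sub_distrib] at h1
  rw [Finset.sum_add_distrib] at h2
  simp only [sum_ind] at h1 h2
  rcases zmod2_cases s with rfl | rfl <;> linarith

theorem card_diff_hyp {n : ℕ} (F : Finset (V n)) {r : V n} (hr : r ≠ 0) (s : ZMod 2) :
    ((F \ hyp r s).card : ℝ) ≤ 2 ^ n / 2 := by
  rw [← card_hyp hr (s + 1)]
  have : F \ hyp r s ⊆ hyp r (s + 1) := by
    intro x hx
    simp only [hyp, Finset.mem_sdiff, Finset.mem_filter, Finset.mem_univ, true_and] at hx ⊢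
    have h2 := hx.2
    generalize dot x r = a at h2
    clear hx
    revert h2 a s; decide
  exact_mod_cast Finset.card_le_card this

theorem stability {n : ℕ} (F : Finset (V n)) (h1 : (1 / 2 - 1 / 1000) * (2 : ℝ) ^ n ≤ F.card)
    (h2 : ((pop (1 / 100000) F).card : ℝ) ≤ (1 / 2 + 1 / 1000) * 2 ^ n) :
    ∃ r : V n, r ≠ 0 ∧ ∃ s : ZMod 2, ((F \ hyp r s).card : ℝ) ≤ 1 / 200 * 2 ^ n := by
  classical
  by_contra! hcon
  have hN : (0 : ℝ) < 2 ^ n := by positivity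
  have hb : ∀ r : V n, r ≠ 0 → ft (ind F) r ^ 2 ≤ ((1 / 2 - 1 / 200) * 2 ^ n) ^ 2 := by
    intro r hr
    rw [ft_ind]
    have a0 := hcon r hr 0
    have a1 := hcon r hr 1
    have b0 := card_diff_hyp F hr 0
    have b1 := card_diff_hyp F hr 1
    apply sq_le_sq'
    · linarith
    · linarith
  set N : ℝ := 2 ^ n with hNd
  set c := conv (ind F) (ind F) with hc
  have hc0 : ∀ x, 0 ≤ c x := fun x =>
    Finset.sum_nonneg fun y _ => mul_nonneg (ind_nonneg _ _) (ind_nonneg _ _)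
  have hft0 : ∀ g : V n → ℝ, ft g 0 = ∑ x, g x := by
    intro g; simp [ft, chi_comm _ (0 : V n), chi_zero]
  have hcs : ∑ x, c x = (F.card : ℝ) ^ 2 := by
    rw [← hft0, hc, ft_conv, hft0, sum_ind]; ring
  have hF := card_le F
  -- second moment
  have hm : N * ∑ x, c x ^ 2 ≤ (F.card : ℝ) ^ 4 +
      ((1 / 2 - 1 / 200) * N) ^ 2 * (N * F.card - (F.card : ℝ) ^ 2) := by
    have hp := parseval_ind F
    rw [← Finset.add_sum_erase _ _ (Finset.mem_univ (0 : V n)), hft0, sum_ind] at hp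
    rw [← parseval, ← Finset.add_sum_erase _ _ (Finset.mem_univ (0 : V n)), hft0, hcs]
    have : ∑ x ∈ Finset.univ.erase (0 : V n), ft c x ^ 2 ≤
        ∑ x ∈ Finset.univ.erase (0 : V n), ((1 / 2 - 1 / 200) * N) ^ 2 * ft (ind F) x ^ 2 := by
      refine Finset.sum_le_sum fun r hr => ?_
      rw [hc, ft_conv]
      have := hb r (Finset.ne_of_mem_erase hr)
      calc (ft (ind F) r * ft (ind F) r) ^ 2 = ft (ind F) r ^ 2 * ft (ind F) r ^ 2 := by ring
        _ ≤ _ := by gcongr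
    rw [← Finset.mul_sum] at this
    have e1 : ∑ x ∈ Finset.univ.erase (0 : V n), ft (ind F) x ^ 2
      = N * F.card - (F.card : ℝ) ^ 2 := by linarith
    rw [e1] at this
    linarith
  set D := pop (1 / 100000) F with hD
  have hD1 : (F.card : ℝ) ^ 2 - 1 / 100000 * N ^ 2 ≤ ∑ x ∈ D, c x := by
    have : ∑ x ∈ Dᶜ, c x ≤ ∑ x ∈ Dᶜ, 1 / 100000 * N := by
      refine Finset.sum_le_sum fun x hx => ?_
      have : ¬ (1 / 100000 * 2 ^ n ≤ conv (ind F) (ind F) x) := by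
        simpa [hD, pop] using hx
      exact (not_le.1 this).le
    have h3 : ∑ x ∈ Dᶜ, 1 / 100000 * N ≤ 1 / 100000 * N ^ 2 := by
      rw [Finset.sum_const, nsmul_eq_mul]
      have := card_le Dᶜ
      nlinarith
    have := Finset.sum_add_sum_compl D c
    linarith
  have hCS : (∑ x ∈ D, c x) ^ 2 ≤ D.card * ∑ x, c x ^ 2 := by
    refine (sq_sum_le_card_mul_sum_sq).trans ?_
    refine mul_le_mul_of_nonneg_left ?_ (Nat.cast_nonneg _)
    exact Finset.sum_le_univ_sum_of_nonneg (fun r => sq_nonneg _)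
  -- normalise
  obtain ⟨a, ha⟩ : ∃ a : ℝ, (F.card : ℝ) = a * N := ⟨F.card / N, by field_simp⟩
  obtain ⟨q, hq⟩ : ∃ q : ℝ, ∑ x, c x ^ 2 = q * N ^ 3 := ⟨(∑ x, c x ^ 2) / N ^ 3, by field_simp⟩
  obtain ⟨b, hb'⟩ : ∃ b : ℝ, (D.card : ℝ) = b * N := ⟨D.card / N, by field_simp⟩
  rw [ha] at h1 hm hD1 hF
  rw [hq] at hm hCS
  rw [hb'] at h2 hCS
  have g1 : 1 / 2 - 1 / 1000 ≤ a := le_of_mul_le_mul_right h1 hN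
  have g2 : b ≤ 1 / 2 + 1 / 1000 := le_of_mul_le_mul_right h2 hN
  have g3 : a ≤ 1 := le_of_mul_le_mul_right (by linarith) hN
  have g4 : q ≤ a ^ 4 + (1 / 2 - 1 / 200) ^ 2 * (a - a ^ 2) := by
    refine le_of_mul_le_mul_right ?_ (pow_pos hN 4)
    calc q * N ^ 4 = N * (q * N ^ 3) := by ring
      _ ≤ _ := hm
      _ = _ := by ring
  have g5 : (a ^ 2 - 1 / 100000) ^ 2 ≤ b * q := by
    refine le_of_mul_le_mul_right ?_ (pow_pos hN 4)
    have hpos : 0 ≤ (a ^ 2 - 1 / 100000) * N ^ 2 := by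
      apply mul_nonneg _ (by positivity)
      nlinarith
    calc (a ^ 2 - 1 / 100000) ^ 2 * N ^ 4 = ((a ^ 2 - 1 / 100000) * N ^ 2) ^ 2 := by ring
      _ ≤ (∑ x ∈ D, c x) ^ 2 := by
        apply pow_le_pow_left₀ hpos
        calc _ = (a * N) ^ 2 - 1 / 100000 * N ^ 2 := by ring
          _ ≤ _ := hD1
      _ ≤ _ := hCS
      _ = _ := by ring
  have hq0 : 0 ≤ q := by
    have : 0 ≤ q * N ^ 3 := by rw [← hq]; positivity
    exact nonneg_of_mul_nonneg_left this (by positivity)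
  have g6 : (a ^ 2 - 1 / 100000) ^ 2 ≤ (1 / 2 + 1 / 1000) * q :=
    g5.trans (by gcongr)
  have g7 : a - a ^ 2 ≤ 1 / 4 := by nlinarith [sq_nonneg (a - 1 / 2)]
  have g8 : q ≤ a ^ 4 + (1 / 2 - 1 / 200) ^ 2 * (1 / 4) := g4.trans (by gcongr)
  have g9 : (1 / 2 - 1 / 1000 : ℝ) ^ 4 ≤ a ^ 4 := by gcongr
  have g10 : a ^ 2 ≤ 1 := by nlinarith
  have g11 : a ^ 4 - 2 / 100000 ≤ (a ^ 2 - 1 / 100000) ^ 2 := by nlinarith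
  norm_num at *
  linarith

theorem small_count (n : ℕ) (t : ℝ) (s : ℕ) :
    (((Finset.univ.filter fun X : Finset (V n) => (X.card : ℝ) ≤ t * 2 ^ n).card : ℕ) : ℝ) ≤
      (2 : ℝ) ^ ((s * t + 2 / 2 ^ s) * 2 ^ n) := by
  classical
  set T := Finset.univ.filter fun X : Finset (V n) => (X.card : ℝ) ≤ t * 2 ^ n with hT
  have h1 : ∑ X : Finset (V n), ((1 : ℝ) / 2 ^ s) ^ X.card = (1 / 2 ^ s + 1) ^ (2 ^ n) := by
    have := Fintype.sum_pow_mul_eq_add_pow (V n) ((1 : ℝ) / 2 ^ s) 1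
    rw [cardV] at this
    simpa using this
  have h2 : (T.card : ℝ) * (2 : ℝ) ^ (-(s * t * 2 ^ n)) ≤
      ∑ X : Finset (V n), ((1 : ℝ) / 2 ^ s) ^ X.card := by
    refine le_trans ?_ (Finset.sum_le_univ_sum_of_nonneg (s := T) (fun X => by positivity))
    rw [← nsmul_eq_mul]
    refine Finset.card_nsmul_le_sum _ _ _ fun X hX => ?_
    have hX' : (X.card : ℝ) ≤ t * 2 ^ n := by simpa [hT] using hX
    have : ((1 : ℝ) / 2 ^ s) ^ X.card = (2 : ℝ) ^ (-(s * X.card : ℝ)) := by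
      rw [Real.rpow_neg (by norm_num), one_div, inv_pow, ← pow_mul, ← Nat.cast_mul,
        Real.rpow_natCast]
    rw [this]
    apply Real.rpow_le_rpow_of_exponent_le (by norm_num)
    have : (s : ℝ) * X.card ≤ s * (t * 2 ^ n) := by gcongr
    linarith
  have h3 : ((1 : ℝ) / 2 ^ s + 1) ^ (2 ^ n) ≤ (2 : ℝ) ^ ((2 : ℝ) / 2 ^ s * 2 ^ n) := by
    have a1 : (1 : ℝ) / 2 ^ s + 1 ≤ (2 : ℝ) ^ ((2 : ℝ) / 2 ^ s) := by
      refine (Real.add_one_le_exp _).trans ?_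
      rw [Real.rpow_def_of_pos (by norm_num)]
      apply Real.exp_le_exp.2
      have := Real.log_two_gt_d9
      have hp : (0 : ℝ) < 1 / 2 ^ s := by positivity
      have : Real.log 2 * (2 / 2 ^ s) = (2 * Real.log 2) * (1 / 2 ^ s) := by ring
      rw [this]
      nlinarith
    rw [Real.rpow_mul (by norm_num)]
    have : ((2 : ℝ) ^ ((2 : ℝ) / 2 ^ s)) ^ ((2 : ℝ) ^ n) =
        ((2 : ℝ) ^ ((2 : ℝ) / 2 ^ s)) ^ (2 ^ n) := by
      rw [← Real.rpow_natCast _ (2 ^ n)]; push_cast; rfl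
    rw [this]
    exact pow_le_pow_left₀ (by positivity) a1 _
  rw [h1] at h2
  have h4 := h2.trans h3
  rw [add_mul, Real.rpow_add (by norm_num)]
  rw [Real.rpow_neg (by norm_num), ← div_eq_mul_inv, div_le_iff₀ (by positivity)] at h4
  linarith

open Classical in
theorem near_count {n : ℕ} (F : Finset (V n)) (t : ℝ) (s : ℕ) :
    (((Finset.univ.filter fun A : Finset (V n) => ((A \ F).card : ℝ) ≤ t * 2 ^ n).card : ℕ) : ℝ) ≤
      2 ^ (F.card : ℝ) * (2 : ℝ) ^ ((s * t + 2 / 2 ^ s) * 2 ^ n) := by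
  refine le_trans ?_ (mul_le_mul_of_nonneg_left (small_count n t s) (by positivity))
  rw [Real.rpow_natCast]
  have : (Finset.univ.filter fun A : Finset (V n) => ((A \ F).card : ℝ) ≤ t * 2 ^ n).card ≤
    (F.powerset ×ˢ
      (Finset.univ.filter fun X : Finset (V n) => (X.card : ℝ) ≤ t * 2 ^ n)).card := by
    refine Finset.card_le_card_of_injOn (fun A => (A ∩ F, A \ F)) ?_ ?_
    · intro A hA
      simp at hA ⊢
      exact hA
    · intro A _ B _ h
      simp only [Prod.mk.injEq] at h
      rw [← Finset.sdiff_union_inter A F, ← Finset.sdiff_union_inter B F, h.1, h.2]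
  rw [Finset.card_product, Finset.card_powerset] at this
  exact_mod_cast this

open Classical in
theorem struct_count {n : ℕ} {r h : V n} (hr : r ≠ 0) (hh : h ≠ 0) (hrh : dot h r = 0)
    (u : ZMod 2) (t : ℝ) (s : ℕ) :
    (((Finset.univ.filter fun A : Finset (V n) => ((A \ hyp r u).card : ℝ) ≤ t * 2 ^ n ∧
      h ∉ A + A).card : ℕ) : ℝ) ≤
      2 ^ (2 / 5 * (2 : ℝ) ^ n) * (2 : ℝ) ^ ((s * t + 2 / 2 ^ s) * 2 ^ n) := by
  obtain ⟨e, he⟩ := exists_dot_one hh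
  rw [dot_comm] at he
  set P := (hyp r u).filter (fun x => dot x e = 0) with hP
  have hPm : ∀ x, x ∈ P ↔ dot x r = u ∧ dot x e = 0 := by simp [hP, hyp]
  have hPc : (P.card : ℝ) ≤ 2 ^ n / 4 := by
    have h1 : (P.image (fun x => x + h)).card = P.card :=
      Finset.card_image_of_injective _ (add_left_injective h)
    have h2 : Disjoint P (P.image (fun x => x + h)) := by
      rw [Finset.disjoint_left]
      intro x hx hx'
      obtain ⟨y, hy, rfl⟩ := Finset.mem_image.1 hx'
      have a1 := ((hPm _).1 hx).2
      have a2 := ((hPm _).1 hy).2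
      rw [dot_add, a2, he] at a1
      exact absurd a1 (by decide)
    have h3 : P ∪ P.image (fun x => x + h) ⊆ hyp r u := by
      intro x hx
      rcases Finset.mem_union.1 hx with hx | hx
      · exact (Finset.mem_filter.1 hx).1
      · obtain ⟨y, hy, rfl⟩ := Finset.mem_image.1 hx
        have a2 := ((hPm _).1 hy).1
        simp [hyp, dot_add, a2, hrh]
    have h4 := Finset.card_le_card h3
    rw [Finset.card_union_of_disjoint h2, h1] at h4
    have h5 := card_hyp hr u
    have h6 : (P.card : ℝ) + P.card ≤ (hyp r u).card := by exact_mod_cast h4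
    linarith
  have h3 : (3 : ℝ) ^ P.card ≤ 2 ^ (2 / 5 * (2 : ℝ) ^ n) := by
    have a1 : (3 : ℝ) ≤ 2 ^ (8 / 5 : ℝ) := by
      refine le_of_pow_le_pow_left₀ (n := 5) (by norm_num) (by positivity) ?_
      rw [← Real.rpow_natCast (2 ^ (8 / 5 : ℝ)), ← Real.rpow_mul (by norm_num)]
      norm_num
    calc (3 : ℝ) ^ P.card ≤ (2 ^ (8 / 5 : ℝ)) ^ P.card := by gcongr
      _ = 2 ^ ((8 / 5 : ℝ) * P.card) := by
        rw [← Real.rpow_natCast (2 ^ (8 / 5 : ℝ)), ← Real.rpow_mul (by norm_num)]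
      _ ≤ _ := by
        apply Real.rpow_le_rpow_of_exponent_le (by norm_num)
        linarith
  refine le_trans ?_ (mul_le_mul h3 (small_count n t s) (by positivity) (by positivity))
  have : (Finset.univ.filter fun A : Finset (V n) => ((A \ hyp r u).card : ℝ) ≤ t * 2 ^ n ∧
      h ∉ A + A).card ≤ ((Finset.univ : Finset (P → Fin 3)) ×ˢ
      (Finset.univ.filter fun X : Finset (V n) => (X.card : ℝ) ≤ t * 2 ^ n)).card := by
    refine Finset.card_le_card_of_injOn (fun A => ((fun x => if (x : V n) ∈ A then 1 else
      if (x : V n) + h ∈ A then 2 else 0), A \ hyp r u)) ?_ ?_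
    · intro A hA
      simp at hA ⊢
      exact hA.1
    · have key : ∀ A B : Finset (V n), h ∉ A + A → h ∉ B + B →
          (fun x : P => if (x : V n) ∈ A then (1 : Fin 3) else
            if (x : V n) + h ∈ A then 2 else 0) = (fun x : P => if (x : V n) ∈ B then (1 : Fin 3)
            else if (x : V n) + h ∈ B then 2 else 0) →
          A \ hyp r u = B \ hyp r u → A ⊆ B := by
        intro A B hA hB h1 h2 x hx
        by_cases hxu : dot x r = u
        · by_cases hxe : dot x e = 0
          · have := congrFun h1 ⟨x, (hPm x).2 ⟨hxu, hxe⟩⟩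
            simp only [hx, if_true] at this
            by_contra hxB
            simp only [hxB, if_false] at this
            split_ifs at this
            · exact absurd this (by decide)
            · exact absurd this (by decide)
          · have hxe' := (zmod2_cases _).resolve_left hxe
            have hxP : x + h ∈ P := by
              rw [hPm, dot_add, dot_add, hxu, hxe', hrh, he]
              exact ⟨add_zero _, by decide⟩
            have hnot : x + h ∉ A := fun hc => hA (by
              rw [Finset.mem_add]
              exact ⟨x, hx, x + h, hc, vadd_cancel _ _⟩)
            have := congrFun h1 ⟨x + h, hxP⟩
            have hxx : x + h + h = x := by rw [add_assoc, vadd_self, add_zero]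
            simp only [hnot, if_false, hxx, hx, if_true] at this
            by_contra hxB
            simp only [hxB, if_false] at this
            split_ifs at this
            · exact absurd this (by decide)
            · exact absurd this (by decide)
        · have : x ∈ A \ hyp r u := by simp [hyp, hx, hxu]
          rw [h2] at this
          exact (Finset.mem_sdiff.1 this).1
      intro A hA B hB hAB
      simp only [Prod.mk.injEq] at hAB
      have hA' : h ∉ A + A := by
        have := Finset.mem_coe.1 hA
        exact (Finset.mem_filter.1 this).2.2
      have hB' : h ∉ B + B := by
        have := Finset.mem_coe.1 hB
        exact (Finset.mem_filter.1 this).2.2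
      exact Finset.Subset.antisymm (key A B hA' hB' hAB.1 hAB.2)
        (key B A hB' hA' hAB.1.symm hAB.2.symm)
  rw [Finset.card_product] at this
  have hc : (Finset.univ : Finset (P → Fin 3)).card = 3 ^ P.card := by
    simp
  rw [hc] at this
  exact_mod_cast this
theorem card_biUnion_real {α β : Type*} [DecidableEq β] (s : Finset α) (f : α → Finset β) (B M : ℝ)
    (hB : ∀ a ∈ s, ((f a).card : ℝ) ≤ B) (hB0 : 0 ≤ B) (hM : (s.card : ℝ) ≤ M) :
    ((s.biUnion f).card : ℝ) ≤ M * B := by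
  calc ((s.biUnion f).card : ℝ) ≤ ((∑ a ∈ s, (f a).card : ℕ) : ℝ) := by
        exact_mod_cast Finset.card_biUnion_le
    _ = ∑ a ∈ s, ((f a).card : ℝ) := by push_cast; rfl
    _ ≤ s.card • B := Finset.sum_le_card_nsmul _ _ _ hB
    _ = s.card * B := nsmul_eq_mul _ _
    _ ≤ _ := by gcongr

theorem final_arith {X Y Z u1 u2 u3 c : ℝ} (hX1 : 1 ≤ X) (hY1 : 1 ≤ Y) (hZ1 : 1 ≤ Z)
    (b1 : u1 ≤ Y * X) (b2 : u2 ≤ Y * X) (b3 : u3 ≤ 2 * Z * X) (hc : c ≤ 1 + u1 + u2 + u3) :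
    c ≤ Y * Z * 8 * X := by
  have hX0 : 0 ≤ X := by linarith
  have e1 : Y * X ≤ Y * Z * X := by
    apply mul_le_mul_of_nonneg_right _ hX0; nlinarith
  have e2 : Z * X ≤ Y * Z * X := by
    apply mul_le_mul_of_nonneg_right _ hX0; nlinarith
  have e3 : 1 ≤ Y * Z * X := by
    have : 1 ≤ Y * Z := by nlinarith
    nlinarith
  linarith

theorem main_bound {K : ℕ} (hK : (1 : ℝ) ≤ K * (1 / 100000) ^ 7) (n : ℕ) :
    ((sumsets n \ Hfam n).card : ℝ) ≤
      (2 : ℝ) ^ ((n * K + 2 ^ K : ℝ) + 2 * n + 3) *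
        2 ^ ((1 / 2 - 3 / 10000) * (2 : ℝ) ^ n) := by
  classical
  set X : ℝ := 2 ^ ((1 / 2 - 3 / 10000) * (2 : ℝ) ^ n) with hX
  have hX1 : 1 ≤ X := Real.one_le_rpow (by norm_num) (by positivity)
  set e : ℝ := 1 / 100000 with he
  set U1 : Finset (Finset (V n)) := ((fam n K).filter
    (fun F => (F.card : ℝ) ≤ (1 / 2 - 1 / 1000) * 2 ^ n)).biUnion (fun F =>
      (Finset.univ.filter fun A : Finset (V n) => ((A \ F).card : ℝ) ≤ e * 2 ^ n).image
        (fun A => A + A)) with hU1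
  set U2 : Finset (Finset (V n)) := ((fam n K).filter
    (fun F => (1 / 2 + 1 / 1000) * 2 ^ n ≤ ((pop e F).card : ℝ))).biUnion (fun F =>
      Finset.univ.filter fun S : Finset (V n) => ((pop e F \ S).card : ℝ) ≤ e * 2 ^ n) with hU2
  set U3 : Finset (Finset (V n)) := ((Finset.univ : Finset (V n × V n × ZMod 2)).filter
    (fun p => p.1 ≠ 0 ∧ p.2.1 ≠ 0 ∧ dot p.2.1 p.1 = 0)).biUnion (fun p =>
      (Finset.univ.filter fun A : Finset (V n) =>
        ((A \ hyp p.1 p.2.2).card : ℝ) ≤ (1 / 200 + e) * 2 ^ n ∧ p.2.1 ∉ A + A).image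
        (fun A => A + A)) with hU3
  have hcov : sumsets n \ Hfam n ⊆ {∅} ∪ U1 ∪ U2 ∪ U3 := by
    intro S hS
    rw [Finset.mem_sdiff] at hS
    obtain ⟨hS1, hS2⟩ := hS
    obtain ⟨A, -, rfl⟩ := Finset.mem_image.1 hS1
    rcases A.eq_empty_or_nonempty with rfl | ⟨a, haA⟩
    · simp
    obtain ⟨F, hF, hF1, hF2⟩ := container (e := e) (by norm_num [he]) (by norm_num [he]) K hK n A
    by_cases c1 : (F.card : ℝ) ≤ (1 / 2 - 1 / 1000) * 2 ^ n
    · have : A + A ∈ U1 := by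
        refine Finset.mem_biUnion.2 ⟨F, Finset.mem_filter.2 ⟨hF, c1⟩, ?_⟩
        exact Finset.mem_image.2 ⟨A, Finset.mem_filter.2 ⟨Finset.mem_univ _, hF1⟩, rfl⟩
      simp only [Finset.mem_union]; tauto
    by_cases c2 : (1 / 2 + 1 / 1000) * 2 ^ n ≤ ((pop e F).card : ℝ)
    · have : A + A ∈ U2 := by
        refine Finset.mem_biUnion.2 ⟨F, Finset.mem_filter.2 ⟨hF, c2⟩, ?_⟩
        exact Finset.mem_filter.2 ⟨Finset.mem_univ _, hF2⟩
      simp only [Finset.mem_union]; tauto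
    obtain ⟨r, hr, s, hs⟩ := stability F (not_le.1 c1).le (not_le.1 c2).le
    have : A + A ∈ U3 := by
      have hnot : ¬ perp r ⊆ A + A := by
        intro hsub
        exact hS2 (Finset.mem_filter.2 ⟨Finset.mem_univ _, r, hr, hsub⟩)
      obtain ⟨h, hh, hhA⟩ := Finset.not_subset.1 hnot
      have hdot : dot h r = 0 := (Finset.mem_filter.1 hh).2
      have hh0 : h ≠ 0 := by
        rintro rfl
        exact hhA (Finset.mem_add.2 ⟨a, haA, a, haA, vadd_self a⟩)
      refine Finset.mem_biUnion.2 ⟨(r, h, s), Finset.mem_filter.2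
        ⟨Finset.mem_univ _, hr, hh0, hdot⟩, ?_⟩
      refine Finset.mem_image.2 ⟨A, Finset.mem_filter.2 ⟨Finset.mem_univ _, ?_, hhA⟩, rfl⟩
      have hsub : A \ hyp r s ⊆ (A \ F) ∪ (F \ hyp r s) := by
        intro x hx
        simp only [Finset.mem_union, Finset.mem_sdiff] at hx ⊢
        tauto
      have h1 := (Finset.card_le_card hsub).trans (Finset.card_union_le _ _)
      have h2 : ((A \ hyp r s).card : ℝ) ≤ (A \ F).card + (F \ hyp r s).card := by
        exact_mod_cast h1
      have h3 := add_le_add hF1 hs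
      refine h2.trans (h3.trans (le_of_eq ?_))
      ring
    simp only [Finset.mem_union]; tauto
  have hNpos : (0 : ℝ) < 2 ^ n := by positivity
  have hfam : ((fam n K).card : ℝ) ≤ 2 ^ (n * K + 2 ^ K) := by exact_mod_cast card_fam n K
  have b1 : (U1.card : ℝ) ≤ 2 ^ (n * K + 2 ^ K) * X := by
    refine card_biUnion_real _ _ _ _ ?_ (by positivity) ?_
    · intro F hF
      have hF' := (Finset.mem_filter.1 hF).2
      refine le_trans (by exact_mod_cast Finset.card_image_le) ((near_count F e 12).trans ?_)
      rw [← Real.rpow_add (by norm_num)]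
      apply Real.rpow_le_rpow_of_exponent_le (by norm_num)
      rw [he]; norm_num; nlinarith
    · refine le_trans ?_ hfam
      exact_mod_cast Finset.card_filter_le _ _
  have b2 : (U2.card : ℝ) ≤ 2 ^ (n * K + 2 ^ K) * X := by
    refine card_biUnion_real _ _ _ _ ?_ (by positivity) ?_
    · intro F hF
      have hF' := (Finset.mem_filter.1 hF).2
      have hcard : (Finset.univ.filter fun S : Finset (V n) =>
          ((pop e F \ S).card : ℝ) ≤ e * 2 ^ n).card ≤
          (Finset.univ.filter fun A : Finset (V n) =>
            ((A \ (pop e F)ᶜ).card : ℝ) ≤ e * 2 ^ n).card := by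
        refine Finset.card_le_card_of_injOn (fun S => Sᶜ) ?_ ?_
        · intro S hS
          have hS' := (Finset.mem_filter.1 (Finset.mem_coe.1 hS)).2
          have : Sᶜ \ (pop e F)ᶜ = pop e F \ S := by
            ext x; simp only [Finset.mem_sdiff, Finset.mem_compl]; tauto
          refine Finset.mem_coe.2 (Finset.mem_filter.2 ⟨Finset.mem_univ _, ?_⟩)
          rw [this]; exact hS'
        · intro S _ T _ h
          exact compl_injective h
      refine le_trans (by exact_mod_cast hcard) ((near_count (pop e F)ᶜ e 12).trans ?_)
      rw [← Real.rpow_add (by norm_num)]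
      apply Real.rpow_le_rpow_of_exponent_le (by norm_num)
      have hcc : (((pop e F)ᶜ.card : ℕ) : ℝ) = 2 ^ n - (pop e F).card := by
        have := Finset.card_add_card_compl (pop e F)
        rw [cardV] at this
        have h2 : ((pop e F).card : ℝ) + ((pop e F)ᶜ.card : ℕ) = 2 ^ n := by exact_mod_cast this
        linarith
      rw [hcc]
      have : (((12 : ℕ) : ℝ) * e + 2 / 2 ^ 12) ≤ 7 / 10000 := by rw [he]; norm_num
      nlinarith
    · refine le_trans ?_ hfam
      exact_mod_cast Finset.card_filter_le _ _
  have b3 : (U3.card : ℝ) ≤ (2 ^ n * (2 ^ n * 2)) * X := by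
    refine card_biUnion_real _ _ _ _ ?_ (by positivity) ?_
    · rintro ⟨r, h, s⟩ hp
      obtain ⟨hr, hh, hrh⟩ := (Finset.mem_filter.1 hp).2
      refine le_trans (by exact_mod_cast Finset.card_image_le)
        ((struct_count hr hh hrh s (1 / 200 + e) 7).trans ?_)
      rw [← Real.rpow_add (by norm_num)]
      apply Real.rpow_le_rpow_of_exponent_le (by norm_num)
      have : (((7 : ℕ) : ℝ) * (1 / 200 + e) + 2 / 2 ^ 7) ≤ 6 / 100 := by rw [he]; norm_num
      nlinarith
    · have h1 := Finset.card_filter_le (Finset.univ : Finset (V n × V n × ZMod 2))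
        (fun p => p.1 ≠ 0 ∧ p.2.1 ≠ 0 ∧ dot p.2.1 p.1 = 0)
      rw [Finset.card_univ, Fintype.card_prod, Fintype.card_prod, cardV, ZMod.card] at h1
      exact_mod_cast h1
  have hc : ((sumsets n \ Hfam n).card : ℝ) ≤ 1 + U1.card + U2.card + U3.card := by
    have h0 := Finset.card_le_card hcov
    have h1 := Finset.card_union_le ({∅} ∪ U1 ∪ U2) U3
    have h2 := Finset.card_union_le ({∅} ∪ U1) U2
    have h3 := Finset.card_union_le {∅} U1
    have h4 : ({∅} : Finset (Finset (V n))).card = 1 := Finset.card_singleton _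
    have : (sumsets n \ Hfam n).card ≤ 1 + U1.card + U2.card + U3.card := by omega
    exact_mod_cast this
  set Y : ℝ := 2 ^ (n * K + 2 ^ K) with hY
  have hY1 : 1 ≤ Y := one_le_pow₀ (by norm_num)
  set Z : ℝ := 2 ^ (2 * n) with hZ
  have hZ1 : 1 ≤ Z := one_le_pow₀ (by norm_num)
  have hZ2 : (2 : ℝ) ^ n * (2 ^ n * 2) = 2 * Z := by rw [hZ]; ring
  have hpow : (2 : ℝ) ^ ((n * K + 2 ^ K : ℝ) + 2 * n + 3) = Y * Z * 8 := by
    have : ((n * K + 2 ^ K : ℝ) + 2 * n + 3) = (((n * K + 2 ^ K) + 2 * n + 3 : ℕ) : ℝ) := by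
      push_cast; ring
    rw [this, Real.rpow_natCast, pow_add, pow_add]; norm_num [hY, hZ]
  rw [hpow]
  rw [hZ2] at b3
  exact final_arith hX1 hY1 hZ1 b1 b2 b3 hc

theorem main_asymp : ∃ n₀ : ℕ, ∀ n : ℕ, n₀ ≤ n → ((sumsets n \ Hfam n).card : ℝ) ≤
    2 ^ (((2 ^ (n - 1) : ℕ) : ℝ) - (2 : ℝ) ^ ((n : ℝ) / 2)) := by
  obtain ⟨K, hK⟩ := exists_nat_ge (1 / ((1 : ℝ) / 100000) ^ 7)
  have hK' : (1 : ℝ) ≤ K * (1 / 100000) ^ 7 := by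
    rwa [div_le_iff₀ (by positivity)] at hK
  have t1 : Filter.Tendsto (fun n : ℕ => (n : ℝ) * (1 / 2) ^ n) Filter.atTop (nhds 0) :=
    tendsto_self_mul_const_pow_of_lt_one (by norm_num) (by norm_num)
  have t2 : Filter.Tendsto (fun n : ℕ => ((1 : ℝ) / 2) ^ n) Filter.atTop (nhds 0) :=
    tendsto_pow_atTop_nhds_zero_of_lt_one (by norm_num) (by norm_num)
  have t3 : Filter.Tendsto (fun n : ℕ => ((2 : ℝ) ^ (-(1 / 2) : ℝ)) ^ n) Filter.atTop (nhds 0) :=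
    tendsto_pow_atTop_nhds_zero_of_lt_one (by positivity)
      (Real.rpow_lt_one_of_one_lt_of_neg (by norm_num) (by norm_num))
  have t4 := ((t1.const_mul ((K : ℝ) + 2)).add (t2.const_mul ((2 : ℝ) ^ K + 3))).add t3
  simp only [mul_zero, add_zero] at t4
  have t5 := t4.eventually_lt_const (show (0 : ℝ) < 3 / 10000 by norm_num)
  obtain ⟨n₀, hn₀⟩ := Filter.eventually_atTop.1 t5
  refine ⟨max n₀ 1, fun n hn => (main_bound hK' n).trans ?_⟩
  have h1 := hn₀ n (le_trans (le_max_left _ _) hn)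
  have hn1 : 1 ≤ n := le_trans (le_max_right _ _) hn
  rw [← Real.rpow_add (by norm_num)]
  apply Real.rpow_le_rpow_of_exponent_le (by norm_num)
  have hN : (0 : ℝ) < 2 ^ n := by positivity
  have e1 : ((2 ^ (n - 1) : ℕ) : ℝ) = 2 ^ n / 2 := by
    obtain ⟨m, rfl⟩ := Nat.exists_eq_add_of_le' hn1
    simp [pow_succ]
  have e2 : ((2 : ℝ) ^ (-(1 / 2) : ℝ)) ^ n * 2 ^ n = (2 : ℝ) ^ ((n : ℝ) / 2) := by
    rw [← Real.rpow_natCast, ← Real.rpow_natCast, ← Real.rpow_mul (by norm_num),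
      ← Real.rpow_add (by norm_num)]
    congr 1; ring
  have e3 : ((1 : ℝ) / 2) ^ n * 2 ^ n = 1 := by rw [← mul_pow]; norm_num
  have h2 := mul_lt_mul_of_pos_right h1 hN
  have h3 : (((K : ℝ) + 2) * (n * (1 / 2) ^ n) + (2 ^ K + 3) * (1 / 2) ^ n +
      ((2 : ℝ) ^ (-(1 / 2) : ℝ)) ^ n) * 2 ^ n =
      (K + 2) * n * ((1 / 2) ^ n * 2 ^ n) + (2 ^ K + 3) * ((1 / 2) ^ n * 2 ^ n) +
      ((2 : ℝ) ^ (-(1 / 2) : ℝ)) ^ n * 2 ^ n := by ring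
  rw [h3, e3, e2] at h2
  rw [e1]
  linarith

theorem card_sumsets_ge (n : ℕ) (hn : 1 ≤ n) :
    (2 : ℝ) ^ ((2 ^ (n - 1) : ℕ) : ℝ) ≤ (sumsets n).card := by
  classical
  obtain ⟨m, rfl⟩ := Nat.exists_eq_add_of_le' hn
  set r : V (m + 1) := Pi.single 0 1 with hr
  have hr0 : r ≠ 0 := by
    intro h
    have := congrFun h 0
    simp [hr] at this
  have hc : (hyp r 1).card = 2 ^ m := by
    have := card_hyp hr0 1
    rw [pow_succ, mul_div_cancel_right₀ _ (by norm_num)] at this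
    exact_mod_cast this
  rw [Real.rpow_natCast, Nat.add_sub_cancel, ← hc]
  have : (hyp r 1).powerset.card ≤ (sumsets (m + 1)).card := by
    have key : ∀ T ∈ (hyp r 1).powerset,
        (insert 0 T + insert 0 T : Finset (V (m + 1))).filter (fun x => dot x r = 1) = T := by
      intro T hT
      have hT' : ∀ x ∈ T, dot x r = 1 := by
        intro x hx
        exact (Finset.mem_filter.1 (Finset.mem_powerset.1 hT hx)).2
      ext x
      simp only [Finset.mem_filter, Finset.mem_add]
      constructor
      · rintro ⟨⟨a, ha, b, hb, rfl⟩, hx⟩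
        rcases Finset.mem_insert.1 ha with rfl | ha
        · rcases Finset.mem_insert.1 hb with rfl | hb
          · rw [add_zero, dot_zero] at hx
            exact absurd hx (by decide)
          · rwa [zero_add]
        · rcases Finset.mem_insert.1 hb with rfl | hb
          · rwa [add_zero]
          · rw [dot_add, hT' a ha, hT' b hb] at hx
            exact absurd hx (by decide)
      · intro hx
        exact ⟨⟨0, Finset.mem_insert_self _ _, x, Finset.mem_insert_of_mem hx, zero_add _⟩,
          hT' x hx⟩
    refine Finset.card_le_card_of_injOn (fun T => insert 0 T + insert 0 T) ?_ ?_
    · intro T _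
      exact Finset.mem_coe.2 (Finset.mem_image.2 ⟨insert 0 T, Finset.mem_univ _, by congr!⟩)
    · intro T hT T' hT' h
      rw [← key T hT, ← key T' hT']
      simp only [] at h
      rw [h]
  rw [Finset.card_powerset] at this
  exact_mod_cast this

/-- There are `c > 0` and `n₀` with
`|𝒮ₙ \ ℋₙ| ≤ 2^(2^(n−1) − 2^(n/2 − c·√n))` for all `n ≥ n₀`; in particular
`|𝒮ₙ \ ℋₙ| = o(|𝒮ₙ|)`. -/
theorem count_sumsets_not_in_Hfam :
    (∃ c : ℝ, 0 < c ∧ ∃ n₀ : ℕ, ∀ n : ℕ, n₀ ≤ n →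
      (((sumsets n \ Hfam n).card : ℝ)) ≤
        2 ^ (((2 ^ (n - 1) : ℕ) : ℝ) - (2 : ℝ) ^ ((n : ℝ) / 2 - c * Real.sqrt n))) ∧
    (∀ ε : ℝ, 0 < ε → ∃ n₀ : ℕ, ∀ n : ℕ, n₀ ≤ n →
      (((sumsets n \ Hfam n).card : ℝ)) ≤ ε * (sumsets n).card) := by
  obtain ⟨n₀, h0⟩ := main_asymp
  refine ⟨⟨1, one_pos, n₀, fun n hn => (h0 n hn).trans ?_⟩, ?_⟩
  · apply Real.rpow_le_rpow_of_exponent_le (by norm_num)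
    have : (2 : ℝ) ^ ((n : ℝ) / 2 - 1 * Real.sqrt n) ≤ 2 ^ ((n : ℝ) / 2) := by
      apply Real.rpow_le_rpow_of_exponent_le (by norm_num)
      have := Real.sqrt_nonneg n
      linarith
    linarith
  · intro ε hε
    obtain ⟨m, hm⟩ := exists_pow_lt_of_lt_one hε (show (1 / 2 : ℝ) < 1 by norm_num)
    refine ⟨max (max n₀ 1) (2 * m), fun n hn => ?_⟩
    have hn1 : 1 ≤ n := by omega
    have hnm : 2 * m ≤ n := by omega
    refine (h0 n (by omega)).trans ?_
    have h1 := card_sumsets_ge n hn1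
    rw [sub_eq_add_neg, Real.rpow_add (by norm_num), mul_comm]
    refine mul_le_mul ?_ h1 (by positivity) hε.le
    refine le_trans ?_ hm.le
    rw [one_div, inv_pow, ← Real.rpow_natCast, ← Real.rpow_neg (by norm_num)]
    apply Real.rpow_le_rpow_of_exponent_le (by norm_num)
    have h2 : (m : ℝ) ≤ (n : ℝ) / 2 := by
      have : ((2 * m : ℕ) : ℝ) ≤ n := by exact_mod_cast hnm
      push_cast at this; linarith
    have h3 : (2 : ℝ) ^ (m : ℝ) ≤ 2 ^ ((n : ℝ) / 2) :=
      Real.rpow_le_rpow_of_exponent_le (by norm_num) h2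
    rw [Real.rpow_natCast] at h3
    have h4 : (m : ℝ) ≤ 2 ^ m := by exact_mod_cast (Nat.lt_two_pow_self).le
    linarith
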